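/- For every ε > 0 there exist n₀ and ε' > 0 such that every T⃗₃-free oriented graph G of order n ≥ n₀ with induced-P⃗₄ density d_{P⃗₄}(G) ≥ 24/125 − ε' can be transformed into a graph isomorphic to C⃗₅(n), the balanced blow-up of the directed 5-cycle on n vertices, by adding, removing, and/or reorienting the arcs of at most ε n² pairs of vertices. -/

import Mathlib

open scoped Classical

/-- An oriented graph: the arc relation has no loops and no 2-cycles. -/
def IsOriented {V : Type*} (A : V → V → Prop) : Prop :=
  ∀ a b : V, A a b → ¬ A b a

/-- `T⃗₃`-freeness: no three vertices span the arcs a→b, b→c, a→c. -/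
def T3Free {V : Type*} (A : V → V → Prop) : Prop :=
  ∀ a b c : V, ¬ (A a b ∧ A b c ∧ A a c)

/-- `S` is the vertex set of an induced copy of the directed path `P⃗ₖ` in the
oriented graph with arc relation `A`. -/
def IsInducedPath {V : Type*} (A : V → V → Prop) (k : ℕ) (S : Finset V) : Prop :=
  ∃ f : Fin k → V, Function.Injective f ∧ (∀ v : V, v ∈ S ↔ ∃ i, f i = v) ∧
    ∀ i j : Fin k, A (f i) (f j) ↔ (j : ℕ) = (i : ℕ) + 1

/-- The number of induced copies of `P⃗ₖ`. -/
noncomputable def numPaths {V : Type*} [Fintype V] [DecidableEq V]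
    (A : V → V → Prop) (k : ℕ) : ℕ :=
  (Finset.univ.filter fun S : Finset V => IsInducedPath A k S).card

/-- The number of induced copies of `P⃗ₖ` containing all vertices of `T`. -/
noncomputable def numPathsThrough {V : Type*} [Fintype V] [DecidableEq V]
    (A : V → V → Prop) (k : ℕ) (T : Finset V) : ℕ :=
  (Finset.univ.filter fun S : Finset V => IsInducedPath A k S ∧ T ⊆ S).card

/-- The density of induced copies of `P⃗ₖ`. -/
noncomputable def pathDensity {V : Type*} [Fintype V] [DecidableEq V]
    (A : V → V → Prop) (k : ℕ) : ℝ :=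
  (numPaths A k : ℝ) / ((Fintype.card V).choose k : ℝ)

/-- The maximum density of induced copies of `P⃗ₖ` over all `T⃗₃`-free oriented
graphs on `n` vertices. -/
noncomputable def maxDensityT3 (k n : ℕ) : ℝ :=
  sSup {d : ℝ | ∃ A : Fin n → Fin n → Prop, IsOriented A ∧ T3Free A ∧ d = pathDensity A k}

/-- The maximum density of induced copies of `P⃗ₖ` over all oriented graphs on `n`
vertices. -/
noncomputable def maxDensityAll (k n : ℕ) : ℝ :=
  sSup {d : ℝ | ∃ A : Fin n → Fin n → Prop, IsOriented A ∧ d = pathDensity A k}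

/-- `S` is the vertex set of an induced copy of the oriented graph `H` in the
oriented graph with arc relation `A`. -/
def IsInducedCopy {V W : Type*} (H : W → W → Prop) (A : V → V → Prop) (S : Finset V) : Prop :=
  ∃ f : W → V, Function.Injective f ∧ (∀ v : V, v ∈ S ↔ ∃ w, f w = v) ∧
    ∀ a b : W, A (f a) (f b) ↔ H a b

/-- The number of induced copies of `H` in `A`. -/
noncomputable def numCopies {V W : Type*} [Fintype V] [DecidableEq V]
    (H : W → W → Prop) (A : V → V → Prop) : ℕ :=
  (Finset.univ.filter fun S : Finset V => IsInducedCopy H A S).card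

/-- The number of (unordered) pairs of vertices on which the two oriented graphs `A`
and `B` differ (an arc must be added, removed, or reoriented). -/
noncomputable def pairDiff {V : Type*} [Fintype V] [LinearOrder V]
    (A B : V → V → Prop) : ℕ :=
  (Finset.univ.filter fun p : V × V => p.1 < p.2 ∧
    ¬ ((A p.1 p.2 ↔ B p.1 p.2) ∧ (A p.2 p.1 ↔ B p.2 p.1))).card

/-- `A` is a blow-up of the directed 5-cycle with parts given by the fibers of `g`. -/
def IsBlowupC5 {V : Type*} (A : V → V → Prop) (g : V → Fin 5) : Prop :=
  ∀ u v : V, A u v ↔ g v = g u + 1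

/-- The size of the part of vertices mapped to `i`. -/
noncomputable def partSize {V : Type*} [Fintype V] {m : ℕ} (g : V → Fin m) (i : Fin m) : ℕ :=
  (Finset.univ.filter fun v : V => g v = i).card

/-- `A` is a balanced blow-up of the directed 5-cycle, i.e. isomorphic to `C⃗₅(n)`. -/
def IsBalancedBlowupC5 {V : Type*} [Fintype V] (A : V → V → Prop) : Prop :=
  ∃ g : V → Fin 5, IsBlowupC5 A g ∧
    ∀ i j : Fin 5, (partSize g i : ℤ) - (partSize g j : ℤ) ≤ 1

/-!
A sum-of-squares argument over 4-tuples of vertices. An arc `u → v` partitions the vertices into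
five parts as if it joined part `0` to part `1` of a blow-up of the directed 5-cycle, and its
defect, which penalizes unequal parts and pairs disagreeing with the blow-up, is nonnegative.
Nonadjacent pairs receive sums of squares as well. A check of all `T⃗₃`-free graphs on four
vertices shows that, averaged over the orderings of a 4-tuple, `500` times the indicator of
an induced path plus the penalties is at most `4`. Hence `P` induced paths leave only `4n⁴ - 500P`
for the total defect of the arcs. If `P` is close to `n⁴/125`, then some arc has defect `o(n²)`,
and moving `o(n)` vertices between its parts yields the balanced blow-up.
-/

section Counting

variable {V : Type*} [Fintype V]

theorem sum_nonneg_of_sum_perm_nonneg {ι R : Type*} [Fintype ι] [DecidableEq ι]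
    [Ring R] [LinearOrder R] [IsStrictOrderedRing R] {F : (ι → V) → R}
    (hF : ∀ t, 0 ≤ ∑ σ : Equiv.Perm ι, F (t ∘ σ)) : 0 ≤ ∑ t, F t := by
  have hreindex (σ : Equiv.Perm ι) : ∑ t : ι → V, F (t ∘ σ) = ∑ t, F t :=
    Equiv.sum_comp (Equiv.arrowCongr σ.symm (Equiv.refl V)) F
  have hsum : 0 ≤ Fintype.card (Equiv.Perm ι) * ∑ t, F t := by
    calc (0 : R) ≤ ∑ t, ∑ σ : Equiv.Perm ι, F (t ∘ σ) := Finset.sum_nonneg fun t _ => hF t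
      _ = Fintype.card (Equiv.Perm ι) * ∑ t, F t := by
        rw [Finset.sum_comm, Finset.sum_congr rfl fun σ _ => hreindex σ, Finset.sum_const,
          Finset.card_univ, nsmul_eq_mul]
  exact nonneg_of_mul_nonneg_right hsum (Nat.cast_pos.mpr Fintype.card_pos)

theorem sum_fin_four_fun {M : Type*} [AddCommMonoid M] (F : V → V → V → V → M) :
    ∑ t : Fin 4 → V, F (t 0) (t 1) (t 2) (t 3) = ∑ u, ∑ v, ∑ x, ∑ y, F u v x y := by
  let e : (Fin 4 → V) ≃ V × V × V × V :=
    { toFun := fun t => (t 0, t 1, t 2, t 3)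
      invFun := fun p => ![p.1, p.2.1, p.2.2.1, p.2.2.2]
      left_inv := fun t => by ext i; fin_cases i <;> rfl
      right_inv := fun _ => rfl }
  rw [← Equiv.sum_comp e.symm]
  simp only [Fintype.sum_prod_type]
  rfl

theorem sum_comp_eq_sum_partSize_mul {R : Type*} [NonAssocSemiring R] {m : ℕ}
    (g : V → Fin m) (f : Fin m → R) :
    ∑ x, f (g x) = ∑ i, partSize g i * f i := by
  rw [← Finset.sum_fiberwise Finset.univ g]
  refine Finset.sum_congr rfl fun i _ => ?_
  rw [Finset.sum_congr rfl fun x hx => congrArg f (Finset.mem_filter.mp hx).2, Finset.sum_const,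
    nsmul_eq_mul, partSize]

theorem sum_partSize {m : ℕ} (g : V → Fin m) : ∑ i, partSize g i = Fintype.card V :=
  (Finset.card_eq_sum_card_fiberwise fun _ _ => Finset.mem_coe.mpr (Finset.mem_univ _)).symm

theorem pow_four_sub_le_choose (n : ℕ) :
    (n : ℝ) ^ 4 - 12 * (n : ℝ) ^ 3 ≤ 24 * (n.choose 4 : ℝ) := by
  have hdesc : ((n + 1 - 4) ^ 4 : ℕ) ≤ 24 * n.choose 4 :=
    (Nat.pow_sub_le_descFactorial n 4).trans_eq (Nat.descFactorial_eq_factorial_mul_choose n 4)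
  have hdesc' : ((n + 1 - 4 : ℕ) : ℝ) ^ 4 ≤ 24 * (n.choose 4 : ℝ) := by exact_mod_cast hdesc
  rcases le_total n 3 with hn | hn
  · have hn' : (n : ℝ) ≤ 3 := by exact_mod_cast hn
    nlinarith [pow_nonneg (Nat.cast_nonneg (α := ℝ) n) 3, Nat.cast_nonneg (α := ℝ) (n.choose 4)]
  · rw [show n + 1 - 4 = n - 3 by omega, Nat.cast_sub hn, Nat.cast_ofNat] at hdesc'
    nlinarith [sq_nonneg ((n : ℝ) - 1)]

end Counting

section Rebalancing

variable {V ι : Type*} [Fintype V] [DecidableEq ι]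

theorem exists_forall_lt_card_fiber_injOn (g : V → ι) :
    ∃ idx : V → ℕ, (∀ v, idx v < (Finset.univ.filter fun w => g w = g v).card) ∧
      ∀ i, Set.InjOn idx (g ⁻¹' {i}) := by
  let e (i : ι) := Fintype.equivFin {v // g v = i}
  let idx (v : V) : ℕ := e (g v) ⟨v, rfl⟩
  have hidx (i : ι) (v : V) (hv : g v = i) : idx v = e i ⟨v, hv⟩ := by
    subst hv
    rfl
  refine ⟨idx, fun v => ?_, fun i v hv w hw h => ?_⟩
  · rw [← Fintype.card_subtype]
    exact (e (g v) ⟨v, rfl⟩).is_lt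
  · rw [hidx i v hv, hidx i w hw] at h
    exact congrArg Subtype.val ((e i).injective (Fin.val_injective h))

theorem card_filter_fst_eq {m : ι → ℕ} [Fintype ι]
    (e : V ≃ (Finset.univ.sigma fun i => Finset.range (m i) : Finset (Σ _ : ι, ℕ))) (i : ι) :
    (Finset.univ.filter fun v => (e v : Σ _ : ι, ℕ).1 = i).card = m i := by
  rw [← Finset.card_range (m i)]
  refine Finset.card_bij (fun v _ => (e v : Σ _ : ι, ℕ).2) (fun v hv => ?_)
    (fun v hv w hw h => ?_) (fun k hk => ?_)
  · obtain rfl := (Finset.mem_filter.mp hv).2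
    exact (Finset.mem_sigma.mp (e v).2).2
  · have hfst := (Finset.mem_filter.mp hv).2.trans (Finset.mem_filter.mp hw).2.symm
    exact e.injective (Subtype.ext (Sigma.ext hfst (heq_of_eq h)))
  · exact ⟨e.symm ⟨⟨i, k⟩, by simpa using hk⟩, by simp, by simp⟩

theorem exists_card_fiber_eq [Fintype ι] (g₀ : V → ι) (m : ι → ℕ)
    (hm : ∑ i, m i = Fintype.card V) :
    ∃ g : V → ι, (∀ i, (Finset.univ.filter fun v => g v = i).card = m i) ∧
      (Finset.univ.filter fun v => g v ≠ g₀ v).card ≤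
        ∑ i, ((Finset.univ.filter fun v => g₀ v = i).card - m i) := by
  obtain ⟨idx, hlt, hinj⟩ := exists_forall_lt_card_fiber_injOn g₀
  let slots : Finset (Σ _ : ι, ℕ) := Finset.univ.sigma fun i => Finset.range (m i)
  let kept : Finset V := {v | idx v < m (g₀ v)}
  obtain ⟨e, he⟩ := Finset.exists_equiv_extend_of_card_eq (t := slots) (s := kept)
    (f := fun v => ⟨g₀ v, idx v⟩) (by simp [slots, hm])
    (Finset.image_subset_iff.mpr fun v hv => by simpa [slots, kept] using hv)
    (fun v _ w _ h => by
      simp only [Sigma.mk.injEq, heq_eq_eq] at h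
      exact hinj (g₀ w) h.1 rfl h.2)
  refine ⟨fun v => (e v : Σ _ : ι, ℕ).1, card_filter_fst_eq e, ?_⟩
  have hmoved : (Finset.univ.filter fun v => (e v : Σ _ : ι, ℕ).1 ≠ g₀ v) ⊆ keptᶜ := by
    intro v hv
    rw [Finset.mem_compl]
    exact fun hkept => (Finset.mem_filter.mp hv).2 (congrArg Sigma.fst (he v hkept))
  refine (Finset.card_le_card hmoved).trans ?_
  rw [Finset.card_eq_sum_card_fiberwise fun v _ => Finset.mem_coe.mpr (Finset.mem_univ (g₀ v))]
  refine Finset.sum_le_sum fun i _ => ?_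
  rw [← Nat.card_Ico]
  refine Finset.card_le_card_of_injOn idx (fun v hv => ?_) (fun v hv w hw => ?_)
  · obtain ⟨hlarge, rfl⟩ := Finset.mem_filter.mp hv
    exact Finset.mem_coe.mpr (Finset.mem_Ico.mpr ⟨by simpa [kept] using hlarge, hlt v⟩)
  · exact hinj i (Finset.mem_filter.mp hv).2 (Finset.mem_filter.mp hw).2

end Rebalancing

section Certificate

variable {V : Type*}

/-- The sign function of an oriented graph: `1` for an arc `u → v`, `-1` for an arc `v → u`,
`0` for a non-adjacent pair. The certificate is checked on sign functions because these, unlike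
arc relations, can be enumerated by computation. -/
noncomputable def arcSign (A : V → V → Prop) (u v : V) : SignType :=
  if A u v then 1 else if A v u then -1 else 0

/-- `s` is the sign function of a `T⃗₃`-free oriented graph. -/
structure IsT3FreeSign (s : V → V → SignType) : Prop where
  antisymm : ∀ u v, s v u = -s u v
  t3Free : ∀ u v w, s u v = 1 → s v w = 1 → s u w ≠ 1

theorem arcSign_eq_one_iff {A : V → V → Prop} {u v : V} : arcSign A u v = 1 ↔ A u v := by
  unfold arcSign
  split_ifs <;> simp_all

theorem isT3FreeSign_arcSign {A : V → V → Prop} (hA : IsOriented A) (hT : T3Free A) :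
    IsT3FreeSign (arcSign A) where
  antisymm u v := by
    have := hA u v
    unfold arcSign
    split_ifs <;> simp_all
  t3Free u v w huv hvw huw := by
    rw [arcSign_eq_one_iff] at huv hvw huw
    exact hT u v w ⟨huv, hvw, huw⟩

/-- The part of the directed 5-cycle `0 → 1 → 2 → 3 → 4 → 0` in which a vertex `x` is placed by
an arc `u → v` with `u` in part `0` and `v` in part `1`, read off from the signs `p` of the pair
`(u, x)` and `q` of the pair `(v, x)`. Part `3` also collects the sign pairs that do not occur in
a blow-up of the cycle, so that every vertex is placed. -/
def cyclePart : SignType → SignType → Fin 5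
  | 0, -1 => 0
  | 1, 0 => 1
  | 0, 1 => 2
  | -1, 0 => 4
  | _, _ => 3

/-- The partition of the vertices into five parts determined by the arc `u → v`. -/
def arcPart (s : V → V → SignType) (u v x : V) : Fin 5 :=
  cyclePart (s u x) (s v x)

/-- The Laplacian of a weighted graph on the five parts. Its quadratic form measures how far
from equal the part sizes are. The weights here and in `nonarcPenalty` are chosen to pass the
finite check `sum_perm_slack_signsOfUpper_nonneg`. -/
def balanceForm : Fin 5 → Fin 5 → ℤ :=
  ![![ 28, -10,    0,  0,  -18],
    ![-10,  28,  -18,  0,    0],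
    ![  0, -18,  124, -4, -102],
    ![  0,   0,   -4,  8,   -4],
    ![-18,   0, -102, -4,  124]]

/-- The contribution of the pair `(x, y)` to the defect of the arc `u → v`: an imbalance term, plus
`4` if `(x, y)` disagrees with the blow-up of the 5-cycle on the parts `arcPart s u v`. -/
def arcPenalty (s : V → V → SignType) (u v x y : V) : ℤ :=
  balanceForm (arcPart s u v x) (arcPart s u v y) +
    if s x y = 1 ↔ arcPart s u v y = arcPart s u v x + 1 then 0 else 4

/-- First certificate weight of a vertex joined with signs `p`, `q` to a non-adjacent pair. -/
def twinWeight : SignType → SignType → ℤ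
  | 1, 1 | -1, -1 => -3
  | 1, -1 | -1, 1 => -8
  | _, _ => 2

/-- Second certificate weight of a vertex joined with signs `p`, `q` to a non-adjacent pair:
the sign of `p + q`. -/
def flowWeight : SignType → SignType → ℤ
  | 1, 1 | 1, 0 | 0, 1 => 1
  | -1, -1 | -1, 0 | 0, -1 => -1
  | _, _ => 0

/-- Third certificate weight of a vertex joined with signs `p`, `q` to a non-adjacent pair. -/
def degreeWeight (p q : SignType) : ℤ :=
  (q : ℤ) ^ 2 - p ^ 2

/-- The contribution of the pair `(x, y)` to the positive semidefinite form attached to a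
non-adjacent pair `u`, `v`. -/
def nonarcPenalty (s : V → V → SignType) (u v x y : V) : ℤ :=
  twinWeight (s u x) (s v x) * twinWeight (s u y) (s v y) +
    13 * (flowWeight (s u x) (s v x) * flowWeight (s u y) (s v y)) +
    5 * (degreeWeight (s u x) (s v x) * degreeWeight (s u y) (s v y))

/-- The penalty of a 4-tuple, rooted at its first two vertices. -/
def penalty (s : V → V → SignType) (u v x y : V) : ℤ :=
  match s u v with
  | 1 => arcPenalty s u v x y
  | 0 => nonarcPenalty s u v x y
  | -1 => 0

/-- The tuple `t` induces the directed path `t 0 → t 1 → t 2 → t 3`. -/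
def IsPathTuple (s : V → V → SignType) (t : Fin 4 → V) : Prop :=
  s (t 0) (t 1) = 1 ∧ s (t 1) (t 2) = 1 ∧ s (t 2) (t 3) = 1 ∧
    s (t 0) (t 2) = 0 ∧ s (t 0) (t 3) = 0 ∧ s (t 1) (t 3) = 0

instance (s : V → V → SignType) (t : Fin 4 → V) : Decidable (IsPathTuple s t) := by
  unfold IsPathTuple; infer_instance

/-- The slack of the sum-of-squares certificate at a 4-tuple: it is nonnegative on average over
the orderings of the tuple, and an induced path weighs `500 = 4 · 125`. -/
def slack (s : V → V → SignType) (t : Fin 4 → V) : ℤ :=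
  4 - (if IsPathTuple s t then 500 else 0) -
    penalty s (t 0) (t 1) (t 2) (t 3)

/-- The sign function on four labelled vertices with prescribed values above the diagonal. -/
def signsOfUpper (a b c d e f : SignType) : Fin 4 → Fin 4 → SignType :=
  ![![0, a, b, c], ![-a, 0, d, e], ![-b, -d, 0, f], ![-c, -e, -f, 0]]

set_option maxRecDepth 100000 in
theorem sum_perm_slack_signsOfUpper_nonneg :
    ∀ a b c d e f : SignType,
      (∀ i j k, signsOfUpper a b c d e f i j = 1 → signsOfUpper a b c d e f j k = 1 →
        signsOfUpper a b c d e f i k ≠ 1) →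
      0 ≤ ∑ σ : Equiv.Perm (Fin 4), slack (signsOfUpper a b c d e f) σ := by
  decide +kernel

theorem eq_signsOfUpper {s : Fin 4 → Fin 4 → SignType} (hs : ∀ i j, s j i = -s i j) :
    s = signsOfUpper (s 0 1) (s 0 2) (s 0 3) (s 1 2) (s 1 3) (s 2 3) := by
  have hdiag (i : Fin 4) : s i i = 0 := SignType.self_eq_neg_iff.mp (hs i i)
  ext i j
  fin_cases i <;> fin_cases j <;> first | exact hdiag _ | rfl | exact hs _ _

theorem sum_perm_slack_nonneg {s : V → V → SignType} (hs : IsT3FreeSign s) (t : Fin 4 → V) :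
    0 ≤ ∑ σ : Equiv.Perm (Fin 4), slack s (t ∘ σ) := by
  have key := eq_signsOfUpper (s := fun i j => s (t i) (t j)) fun _ _ => hs.antisymm _ _
  have h := sum_perm_slack_signsOfUpper_nonneg (s (t 0) (t 1)) (s (t 0) (t 2)) (s (t 0) (t 3))
    (s (t 1) (t 2)) (s (t 1) (t 3)) (s (t 2) (t 3))
  rw [← key] at h
  exact h fun _ _ _ => hs.t3Free _ _ _

theorem sum_slack_nonneg [Fintype V] {s : V → V → SignType} (hs : IsT3FreeSign s) :
    0 ≤ ∑ t, slack s t :=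
  sum_nonneg_of_sum_perm_nonneg (sum_perm_slack_nonneg hs)

end Certificate

section Defect

variable {V : Type*} [Fintype V]

/-- The ordered pairs on which two relations differ. -/
noncomputable def disagreements (R S : V → V → Prop) : Finset (V × V) :=
  {p | ¬ (R p.1 p.2 ↔ S p.1 p.2)}

theorem mem_disagreements {R S : V → V → Prop} {p : V × V} :
    p ∈ disagreements R S ↔ ¬ (R p.1 p.2 ↔ S p.1 p.2) :=
  Finset.mem_filter_univ p

/-- The blow-up of the directed 5-cycle whose parts are the fibers of `g`. -/
def cycleBlowup {V : Type*} (g : V → Fin 5) (x y : V) : Prop :=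
  g y = g x + 1

/-- The total penalty of the 4-tuples rooted at the arc `u → v`. It measures how far the graph is
from the balanced blow-up with parts the fibers of `arcPart s u v`. -/
def arcDefect (s : V → V → SignType) (u v : V) : ℤ :=
  ∑ x, ∑ y, arcPenalty s u v x y

/-- The 4-tuples inducing a directed path, in the order of the path. -/
def pathTuples (s : V → V → SignType) : Finset (Fin 4 → V) :=
  {t | IsPathTuple s t}

theorem sum_balanceForm_eq (g : V → Fin 5) :
    ∑ x, ∑ y, balanceForm (g x) (g y) =
      10 * ((partSize g 0 : ℤ) - partSize g 1) ^ 2 +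
        18 * ((partSize g 1 : ℤ) - partSize g 2) ^ 2 +
        18 * ((partSize g 0 : ℤ) - partSize g 4) ^ 2 +
        4 * ((partSize g 2 : ℤ) - partSize g 3) ^ 2 +
        4 * ((partSize g 3 : ℤ) - partSize g 4) ^ 2 +
        102 * ((partSize g 2 : ℤ) - partSize g 4) ^ 2 := by
  simp only [fun x => sum_comp_eq_sum_partSize_mul g (balanceForm (g x))]
  rw [sum_comp_eq_sum_partSize_mul g fun i => ∑ j, (partSize g j : ℤ) * balanceForm i j]
  simp only [Fin.sum_univ_five, balanceForm, Matrix.cons_val]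
  ring

theorem arcDefect_eq (s : V → V → SignType) (u v : V) :
    arcDefect s u v = ∑ x, ∑ y, balanceForm (arcPart s u v x) (arcPart s u v y) +
      4 * (disagreements (fun x y => s x y = 1) (cycleBlowup (arcPart s u v))).card := by
  simp only [arcDefect, arcPenalty, Finset.sum_add_distrib]
  congr 1
  rw [← Fintype.sum_prod_type', Finset.sum_ite, Finset.sum_const_zero, zero_add, Finset.sum_const,
    nsmul_eq_mul, mul_comm, disagreements]
  congr!

theorem four_mul_card_disagreements_le_arcDefect (s : V → V → SignType) (u v : V) :
    4 * ((disagreements (fun x y => s x y = 1) (cycleBlowup (arcPart s u v))).card : ℤ) ≤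
      arcDefect s u v := by
  rw [arcDefect_eq, sum_balanceForm_eq]
  exact le_add_of_nonneg_left (by positivity)

theorem arcDefect_nonneg (s : V → V → SignType) (u v : V) : 0 ≤ arcDefect s u v :=
  le_trans (by positivity) (four_mul_card_disagreements_le_arcDefect s u v)

theorem sq_partSize_sub_le_arcDefect (s : V → V → SignType) (u v : V) (i j : Fin 5) :
    ((partSize (arcPart s u v) i : ℤ) - partSize (arcPart s u v) j) ^ 2 ≤ arcDefect s u v := by
  rw [arcDefect_eq, sum_balanceForm_eq]
  refine le_add_of_le_of_nonneg ?_ (by positivity)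
  -- Any two parts are at effective resistance at most `1` in the weighted graph of `balanceForm`.
  generalize partSize (arcPart s u v) = c
  fin_cases i <;> fin_cases j <;> dsimp only [Fin.mk_zero, Fin.mk_one, Fin.reduceFinMk] <;>
    linarith [sq_nonneg ((c 0 : ℤ) - c 1), sq_nonneg ((c 1 : ℤ) - c 2),
      sq_nonneg ((c 0 : ℤ) - c 4), sq_nonneg ((c 2 : ℤ) - c 3), sq_nonneg ((c 3 : ℤ) - c 4),
      sq_nonneg ((c 2 : ℤ) - c 4), sq_nonneg ((c 0 : ℤ) - 2 * c 1 + c 2),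
      sq_nonneg ((c 1 : ℤ) - 2 * c 0 + c 4), sq_nonneg ((c 1 : ℤ) - 2 * c 2 + c 3),
      sq_nonneg ((c 0 : ℤ) - 2 * c 4 + c 3)]

theorem sum_nonarcPenalty_nonneg (s : V → V → SignType) (u v : V) :
    0 ≤ ∑ x, ∑ y, nonarcPenalty s u v x y := by
  simp only [nonarcPenalty, Finset.sum_add_distrib, ← Finset.mul_sum, ← Finset.sum_mul, ← pow_two]
  positivity

theorem ite_arcDefect_le_sum_penalty (s : V → V → SignType) (u v : V) :
    (if s u v = 1 then arcDefect s u v else 0) ≤ ∑ x, ∑ y, penalty s u v x y := by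
  unfold penalty
  cases h : s u v with
  | zero => exact sum_nonarcPenalty_nonneg s u v
  | neg => simp
  | pos => exact le_rfl

theorem sum_arcDefect_le {s : V → V → SignType} (hs : IsT3FreeSign s) :
    500 * ((pathTuples s).card : ℤ) +
      ∑ p : V × V with s p.1 p.2 = 1, arcDefect s p.1 p.2 ≤ 4 * (Fintype.card V : ℤ) ^ 4 := by
  have hslack := sum_slack_nonneg hs
  simp only [slack, Finset.sum_sub_distrib] at hslack
  rw [sum_fin_four_fun (penalty s)] at hslack
  have hpaths : ∑ t : Fin 4 → V, (if IsPathTuple s t then (500 : ℤ) else 0) =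
      500 * (pathTuples s).card := by
    rw [← Finset.sum_filter, Finset.sum_const, nsmul_eq_mul, mul_comm, pathTuples]
  have hdefect : ∑ p : V × V with s p.1 p.2 = 1, arcDefect s p.1 p.2 ≤
      ∑ u, ∑ v, ∑ x, ∑ y, penalty s u v x y := by
    rw [Finset.sum_filter, Fintype.sum_prod_type]
    exact Finset.sum_le_sum fun u _ => Finset.sum_le_sum fun v _ =>
      ite_arcDefect_le_sum_penalty s u v
  have hcard : ∑ _t : Fin 4 → V, (4 : ℤ) = 4 * (Fintype.card V : ℤ) ^ 4 := by
    simp [mul_comm]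
  linarith

theorem card_pathTuples_le (s : V → V → SignType) :
    (pathTuples s).card ≤
      (Finset.univ.filter fun p : V × V => s p.1 p.2 = 1).card * Fintype.card V ^ 2 := by
  have hcard := Finset.card_le_card_of_injOn (s := pathTuples s)
    (t := (Finset.univ.filter fun p : V × V => s p.1 p.2 = 1) ×ˢ (Finset.univ : Finset (V × V)))
    (fun t => ((t 0, t 1), (t 2, t 3))) (fun t ht => by
      simpa using (Finset.mem_filter.mp ht).2.1) (fun t _ t' _ h => by
      simp only [Prod.mk.injEq] at h
      ext i; fin_cases i <;> simp [h])
  rwa [Finset.card_product, Finset.card_univ, Fintype.card_prod, ← sq] at hcard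

theorem exists_card_pathTuples_mul_arcDefect_le {s : V → V → SignType}
    (hs : IsT3FreeSign s) (hpos : 0 < (pathTuples s).card) :
    ∃ u v, ((pathTuples s).card : ℤ) * arcDefect s u v ≤
      (Fintype.card V : ℤ) ^ 2 *
        (4 * (Fintype.card V : ℤ) ^ 4 - 500 * (pathTuples s).card) := by
  set P := pathTuples s
  set E := Finset.univ.filter fun p : V × V => s p.1 p.2 = 1
  have hPE : P.card ≤ E.card * Fintype.card V ^ 2 := card_pathTuples_le s
  have hE : E.Nonempty := Finset.card_pos.mp (Nat.pos_of_mul_pos_right (hpos.trans_le hPE))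
  obtain ⟨⟨u, v⟩, -, hmin⟩ := E.exists_min_image (fun p => arcDefect s p.1 p.2) hE
  have hsum : E.card * arcDefect s u v ≤ ∑ p ∈ E, arcDefect s p.1 p.2 := by
    simpa using E.card_nsmul_le_sum _ _ hmin
  refine ⟨u, v, ?_⟩
  calc (P.card : ℤ) * arcDefect s u v
      ≤ (E.card * Fintype.card V ^ 2 : ℕ) * arcDefect s u v := by
        gcongr
        exact arcDefect_nonneg s u v
    _ = (Fintype.card V : ℤ) ^ 2 * (E.card * arcDefect s u v) := by push_cast; ring
    _ ≤ (Fintype.card V : ℤ) ^ 2 * (4 * (Fintype.card V : ℤ) ^ 4 - 500 * P.card) := by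
        gcongr
        linarith [sum_arcDefect_le hs]

end Defect

section Stability

variable {V : Type*} [Fintype V]

theorem pairDiff_le_card_disagreements [LinearOrder V] (A B : V → V → Prop) :
    pairDiff A B ≤ (disagreements A B).card := by
  refine Finset.card_le_card_of_injOn
    (fun p => if A p.1 p.2 ↔ B p.1 p.2 then p.swap else p) (fun p hp => ?_)
    (fun p hp q hq h => ?_)
  · have hdiff := (Finset.mem_filter.mp hp).2.2
    rw [Finset.mem_coe, mem_disagreements]
    by_cases hAB : A p.1 p.2 ↔ B p.1 p.2
    · simpa only [hAB, if_true, Prod.fst_swap, Prod.snd_swap] using fun h => hdiff ⟨hAB, h⟩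
    · simpa only [hAB, if_false] using hAB
  · have hp := (Finset.mem_filter.mp hp).2.1
    have hq := (Finset.mem_filter.mp hq).2.1
    dsimp only at h
    split_ifs at h
    · exact Prod.swap_injective h
    · subst h; exact absurd hp hq.asymm
    · subst h; exact absurd hp hq.asymm
    · exact h

theorem card_disagreements_cycleBlowup_le (R : V → V → Prop) (g₀ g : V → Fin 5) :
    (disagreements R (cycleBlowup g)).card ≤ (disagreements R (cycleBlowup g₀)).card +
      2 * Fintype.card V * (Finset.univ.filter fun v => g v ≠ g₀ v).card := by
  set M := Finset.univ.filter fun v => g v ≠ g₀ v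
  have hsub : disagreements R (cycleBlowup g) ⊆ disagreements R (cycleBlowup g₀) ∪
      (M ×ˢ Finset.univ ∪ Finset.univ ×ˢ M) := by
    rintro ⟨x, y⟩ hxy
    by_cases hx : g x = g₀ x
    · by_cases hy : g y = g₀ y
      · refine Finset.mem_union_left _ ?_
        simpa only [mem_disagreements, cycleBlowup, hx, hy] using hxy
      · simp [M, hy]
    · simp [M, hx]
  calc (disagreements R (cycleBlowup g)).card
      ≤ (disagreements R (cycleBlowup g₀)).card +
          ((M ×ˢ (Finset.univ : Finset V)).card + ((Finset.univ : Finset V) ×ˢ M).card) :=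
        (Finset.card_le_card hsub).trans <| (Finset.card_union_le _ _).trans <|
          Nat.add_le_add_left (Finset.card_union_le _ _) _
    _ = _ := by
        simp only [Finset.card_product, Finset.card_univ]
        ring

theorem partSize_arcPart_le {s : V → V → SignType} {u v : V} {r : ℝ} (hr : 0 ≤ r)
    (h : (arcDefect s u v : ℝ) ≤ r ^ 2) (i : Fin 5) :
    (partSize (arcPart s u v) i : ℝ) ≤ Fintype.card V / 5 + r := by
  have hsub (j : Fin 5) :
      (partSize (arcPart s u v) i : ℝ) - partSize (arcPart s u v) j ≤ r := by
    refine (abs_le_of_sq_le_sq' (le_trans ?_ h) hr).2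
    exact_mod_cast sq_partSize_sub_le_arcDefect s u v i j
  have hsum : ∑ j, (partSize (arcPart s u v) j : ℝ) = Fintype.card V := by
    exact_mod_cast sum_partSize (arcPart s u v)
  rw [Fin.sum_univ_five] at hsum
  linarith [hsub 0, hsub 1, hsub 2, hsub 3, hsub 4]

theorem isBalancedBlowupC5_cycleBlowup {g : V → Fin 5}
    (hg : ∀ i, partSize g i = (Fintype.card V + i) / 5) : IsBalancedBlowupC5 (cycleBlowup g) :=
  ⟨g, fun _ _ => Iff.rfl, fun i j => by rw [hg, hg]; omega⟩

theorem exists_balanced_of_arcDefect_le {s : V → V → SignType} {u v : V} {r : ℝ} (hr : 0 ≤ r)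
    (h : (arcDefect s u v : ℝ) ≤ r ^ 2) :
    ∃ g : V → Fin 5, IsBalancedBlowupC5 (cycleBlowup g) ∧
      ((Finset.univ.filter fun x => g x ≠ arcPart s u v x).card : ℝ) ≤ 5 * (r + 1) := by
  obtain ⟨g, hg, hmoved⟩ := exists_card_fiber_eq (arcPart s u v)
    (fun i : Fin 5 => (Fintype.card V + i) / 5) (by simp only [Fin.sum_univ_five]; omega)
  refine ⟨g, isBalancedBlowupC5_cycleBlowup hg, ?_⟩
  have hexcess (i : Fin 5) :
      ((partSize (arcPart s u v) i - (Fintype.card V + i) / 5 : ℕ) : ℝ) ≤ r + 1 := by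
    have hfloor : (Fintype.card V : ℝ) ≤ 5 * ((Fintype.card V + i) / 5 : ℕ) + 4 := by
      exact_mod_cast (by omega : Fintype.card V ≤ 5 * ((Fintype.card V + i) / 5) + 4)
    have hsize := partSize_arcPart_le hr h i
    rcases le_total ((Fintype.card V + i) / 5) (partSize (arcPart s u v) i) with hle | hle
    · rw [Nat.cast_sub hle]
      linarith
    · rw [Nat.sub_eq_zero_of_le hle, Nat.cast_zero]
      positivity
  calc ((Finset.univ.filter fun x => g x ≠ arcPart s u v x).card : ℝ)
      ≤ ∑ i : Fin 5, ((partSize (arcPart s u v) i - (Fintype.card V + i) / 5 : ℕ) : ℝ) := by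
        exact_mod_cast hmoved
    _ ≤ ∑ _i : Fin 5, (r + 1) := Finset.sum_le_sum fun i _ => hexcess i
    _ = 5 * (r + 1) := by simp [mul_add]

theorem exists_balancedBlowup_pairDiff_le [LinearOrder V] {A : V → V → Prop} {u v : V} {r : ℝ}
    (hr : 0 ≤ r) (h : (arcDefect (arcSign A) u v : ℝ) ≤ r ^ 2) :
    ∃ B : V → V → Prop, IsBalancedBlowupC5 B ∧
      (pairDiff A B : ℝ) ≤ r ^ 2 + 10 * Fintype.card V * (r + 1) := by
  obtain ⟨g, hg, hmoved⟩ := exists_balanced_of_arcDefect_le hr h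
  refine ⟨cycleBlowup g, hg, ?_⟩
  have hdis : (4 : ℝ) * (disagreements A (cycleBlowup (arcPart (arcSign A) u v))).card ≤ r ^ 2 := by
    have := four_mul_card_disagreements_le_arcDefect (arcSign A) u v
    simp only [arcSign_eq_one_iff] at this
    exact le_trans (by exact_mod_cast this) h
  calc (pairDiff A (cycleBlowup g) : ℝ)
      ≤ (disagreements A (cycleBlowup (arcPart (arcSign A) u v))).card + 2 * Fintype.card V *
          (Finset.univ.filter fun x => g x ≠ arcPart (arcSign A) u v x).card := by
        exact_mod_cast (pairDiff_le_card_disagreements _ _).trans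
          (card_disagreements_cycleBlowup_le A _ g)
    _ ≤ r ^ 2 + 2 * Fintype.card V * (5 * (r + 1)) := by
        gcongr
        linarith
    _ = r ^ 2 + 10 * Fintype.card V * (r + 1) := by ring

end Stability

section Density

variable {V : Type*} [Fintype V] {A : V → V → Prop}

theorem numPaths_four_le [DecidableEq V] (A : V → V → Prop) :
    numPaths A 4 ≤ (pathTuples (arcSign A)).card := by
  refine Finset.card_le_card_of_surjOn (fun t => Finset.univ.image t) fun S hS => ?_
  obtain ⟨t, -, hmem, hadj⟩ := (Finset.mem_filter.mp hS).2
  refine ⟨t, ?_, by ext v; simp [hmem]⟩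
  simp [pathTuples, IsPathTuple, arcSign, hadj]

theorem card_pathTuples_ge_of_le_pathDensity [DecidableEq V] {δ : ℝ} (hδ : δ ≤ 24 / 125)
    (hn : 12 ≤ δ * Fintype.card V) (hd : 24 / 125 - δ ≤ pathDensity A 4) :
    (1 / 125 - δ) * (Fintype.card V : ℝ) ^ 4 ≤ (pathTuples (arcSign A)).card := by
  set n := Fintype.card V
  have hδ₀ : 0 < δ := pos_of_mul_pos_left (by linarith) n.cast_nonneg
  have hn₀ : (0 : ℝ) < n := pos_of_mul_pos_right (by linarith) hδ₀.le
  have hchoose : (1 - δ) * (n : ℝ) ^ 4 ≤ 24 * n.choose 4 := by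
    calc (1 - δ) * (n : ℝ) ^ 4 = (n : ℝ) ^ 4 - δ * n * (n : ℝ) ^ 3 := by ring
      _ ≤ (n : ℝ) ^ 4 - 12 * (n : ℝ) ^ 3 := by gcongr
      _ ≤ 24 * n.choose 4 := pow_four_sub_le_choose n
  have hchoose_pos : (0 : ℝ) < n.choose 4 := by
    have : 0 < (1 - δ) * (n : ℝ) ^ 4 := mul_pos (by linarith) (by positivity)
    linarith
  calc (1 / 125 - δ) * (n : ℝ) ^ 4
      ≤ (24 / 125 - δ) * (1 - δ) / 24 * (n : ℝ) ^ 4 := by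
        gcongr
        nlinarith
    _ = (24 / 125 - δ) * ((1 - δ) * (n : ℝ) ^ 4 / 24) := by ring
    _ ≤ (24 / 125 - δ) * n.choose 4 := by
        gcongr
        linarith
    _ ≤ numPaths A 4 := (le_div_iff₀ hchoose_pos).mp hd
    _ ≤ (pathTuples (arcSign A)).card := by exact_mod_cast numPaths_four_le A

theorem exists_arcDefect_le {s : V → V → SignType} (hs : IsT3FreeSign s) [Nonempty V] {δ : ℝ}
    (hδ : δ ≤ 1 / 250)
    (hP : (1 / 125 - δ) * (Fintype.card V : ℝ) ^ 4 ≤ (pathTuples s).card) :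
    ∃ u v, (arcDefect s u v : ℝ) ≤ 125000 * δ * (Fintype.card V : ℝ) ^ 2 := by
  have hn : (0 : ℝ) < Fintype.card V := by exact_mod_cast Fintype.card_pos
  have hmany : (Fintype.card V : ℝ) ^ 4 / 250 ≤ (pathTuples s).card :=
    le_trans (by nlinarith [pow_pos hn 4]) hP
  have hpos : (0 : ℝ) < (pathTuples s).card := lt_of_lt_of_le (by positivity) hmany
  obtain ⟨u, v, huv⟩ := exists_card_pathTuples_mul_arcDefect_le hs (by exact_mod_cast hpos)
  refine ⟨u, v, le_of_mul_le_mul_left ?_ (by positivity : 0 < (Fintype.card V : ℝ) ^ 4 / 250)⟩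
  have hdefect : (0 : ℝ) ≤ arcDefect s u v := by exact_mod_cast arcDefect_nonneg s u v
  have huv' : ((pathTuples s).card : ℝ) * arcDefect s u v ≤ (Fintype.card V : ℝ) ^ 2 *
      (4 * (Fintype.card V : ℝ) ^ 4 - 500 * (pathTuples s).card) := by exact_mod_cast huv
  calc (Fintype.card V : ℝ) ^ 4 / 250 * arcDefect s u v
      ≤ (pathTuples s).card * arcDefect s u v := by gcongr
    _ ≤ (Fintype.card V : ℝ) ^ 2 * (4 * (Fintype.card V : ℝ) ^ 4 - 500 * (pathTuples s).card) :=
        huv'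
    _ ≤ (Fintype.card V : ℝ) ^ 2 * (500 * δ * (Fintype.card V : ℝ) ^ 4) := by
        gcongr
        linarith
    _ = (Fintype.card V : ℝ) ^ 4 / 250 * (125000 * δ * (Fintype.card V : ℝ) ^ 2) := by ring

end Density

/-- **stability.** For every `ε > 0` there are `n₀` and `ε' > 0` such that
every `T⃗₃`-free oriented graph on `n ≥ n₀` vertices with `d_{P⃗₄} ≥ 24/125 − ε'` can be
turned into a graph isomorphic to `C⃗₅(n)` (i.e. a balanced blow-up of the directed
5-cycle) by changing at most `ε n²` pairs of vertices. -/
theorem stability_P4_T3free :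
    ∀ ε : ℝ, 0 < ε → ∃ (n₀ : ℕ) (ε' : ℝ), 0 < ε' ∧
      ∀ n : ℕ, n₀ ≤ n → ∀ A : Fin n → Fin n → Prop, IsOriented A → T3Free A →
        24 / 125 - ε' ≤ pathDensity A 4 →
        ∃ B : Fin n → Fin n → Prop, IsBalancedBlowupC5 B ∧
          (pairDiff A B : ℝ) ≤ ε * (n : ℝ) ^ 2 := by
  intro ε hε
  obtain ⟨r, hr₀, hr₁, hrε⟩ : ∃ r : ℝ, 0 < r ∧ r ≤ 1 ∧ r ≤ ε / 22 :=
    ⟨min 1 (ε / 22), by positivity, min_le_left _ _, min_le_right _ _⟩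
  have hr_sq : r ^ 2 ≤ r := by nlinarith
  obtain ⟨n₀, hn₀⟩ := exists_nat_ge (max (12 / (r ^ 2 / 125000)) (20 / ε))
  refine ⟨n₀, r ^ 2 / 125000, by positivity, fun n hn A hA hT hd => ?_⟩
  have hn' := max_le_iff.mp (hn₀.trans (Nat.cast_le.mpr hn))
  have hnδ : 12 ≤ r ^ 2 / 125000 * n := (div_le_iff₀' (by positivity)).mp hn'.1
  have hnε : 20 ≤ ε * n := (div_le_iff₀' hε).mp hn'.2
  have : NeZero n := ⟨by rintro rfl; norm_num at hnδ⟩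
  have hP := card_pathTuples_ge_of_le_pathDensity (by linarith) (by simpa using hnδ) hd
  obtain ⟨u, v, huv⟩ := exists_arcDefect_le (isT3FreeSign_arcSign hA hT) (by linarith) hP
  rw [mul_div_cancel₀ _ (by norm_num), ← mul_pow, Fintype.card_fin] at huv
  obtain ⟨B, hB, hdiff⟩ := exists_balancedBlowup_pairDiff_le (by positivity) huv
  refine ⟨B, hB, hdiff.trans ?_⟩
  rw [Fintype.card_fin]
  calc (r * n) ^ 2 + 10 * n * (r * n + 1) = (r ^ 2 + 10 * r) * (n : ℝ) ^ 2 + 10 * n := by ring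
    _ ≤ ε / 2 * (n : ℝ) ^ 2 + ε * n / 2 * n := by gcongr <;> linarith
    _ = ε * (n : ℝ) ^ 2 := by ring
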